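/- For every 𝒜 ⊆ {N, C, P, D, 4}, the sequent calculus G_M𝒜ConW is sound and complete for the monotone modal logic M𝒜: for every formula A, A ∈ M𝒜 if and only if the sequent ⇒ A is derivable in G_M𝒜ConW. -/

import Mathlib

/-- Monomodal formulas. -/
inductive Fm : Type
  | var : ℕ → Fm
  | bot : Fm
  | top : Fm
  | neg : Fm → Fm
  | and : Fm → Fm → Fm
  | or : Fm → Fm → Fm
  | imp : Fm → Fm → Fm
  | box : Fm → Fm

/-- Evaluation of the propositional structure of a formula under an assignment
`v` of truth values to formulas (only used on atoms, i.e. propositional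
variables and boxed formulas). -/
def evalP (v : Fm → Prop) : Fm → Prop
  | .var n => v (.var n)
  | .bot => False
  | .top => True
  | .neg A => ¬ evalP v A
  | .and A B => evalP v A ∧ evalP v B
  | .or A B => evalP v A ∨ evalP v B
  | .imp A B => evalP v A → evalP v B
  | .box A => v (.box A)

/-- `A` is an instance of a classical propositional tautology. -/
def Taut (A : Fm) : Prop := ∀ v, evalP v A

/-- A component of a (linear nested) sequent: a two-sided multiset sequent. -/
abbrev Cmp := Multiset Fm × Multiset Fm

/-- A set of additional axioms for monotone modal logic `M`, among
`C, N, P, D, T, 4, 5`. -/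
structure MAx where
  c : Bool := false
  n : Bool := false
  p : Bool := false
  d : Bool := false
  t : Bool := false
  four : Bool := false
  five : Bool := false

/-- Hilbert-style theoremhood in the extension `M𝒜` of monotone modal logic
`M` (classical propositional logic, the congruence rule and the axiom `M`)
with the axioms in `𝒜`. -/
inductive MThm (Ax : MAx) : Fm → Prop
  | taut {A} : Taut A → MThm Ax A
  | mp {A B} : MThm Ax (.imp A B) → MThm Ax A → MThm Ax B
  | cong {A B} : MThm Ax (.imp A B) → MThm Ax (.imp B A) →
      MThm Ax (.imp (.box A) (.box B))
  | axM {A B} : MThm Ax (.imp (.box (.and A B)) (.and (.box A) (.box B)))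
  | axC {A B} : Ax.c = true →
      MThm Ax (.imp (.and (.box A) (.box B)) (.box (.and A B)))
  | axN : Ax.n = true → MThm Ax (.box .top)
  | axP : Ax.p = true → MThm Ax (.neg (.box .bot))
  | axD {A} : Ax.d = true → MThm Ax (.neg (.and (.box A) (.box (.neg A))))
  | axT {A} : Ax.t = true → MThm Ax (.imp (.box A) A)
  | ax4 {A} : Ax.four = true → MThm Ax (.imp (.box A) (.box (.box A)))
  | ax5 {A} : Ax.five = true → MThm Ax (.or (.box A) (.box (.neg (.box A))))

/-- The sequent calculus `G_M𝒜ConW` for extensions of monotone modal logic,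
optionally (for `cut = true`) extended with the multicut rule: the classical
propositional sequent calculus with explicit weakening and contraction, the
rule `M` (if `C ∉ 𝒜`) or `C` (if `C ∈ 𝒜`), a rule for each further axiom in
`𝒜` (the rule `N` also being present whenever `5 ∈ 𝒜`, since `N` is derivable
in `M5`), and the required combination rules `D4`, `D5`, `CD`, `C4`, `CD4`,
`K4`, `K45`, `KD45`, each included exactly when the corresponding combination
of axioms is present. -/
inductive GM (Ax : MAx) (cut : Bool) : Multiset Fm → Multiset Fm → Prop
  | init {Γ Δ : Multiset Fm} {m : ℕ} : GM Ax cut (Fm.var m ::ₘ Γ) (Fm.var m ::ₘ Δ)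
  | botL {Γ Δ} : GM Ax cut (Fm.bot ::ₘ Γ) Δ
  | topR {Γ Δ} : GM Ax cut Γ (Fm.top ::ₘ Δ)
  | negL {Γ Δ A} : GM Ax cut Γ (A ::ₘ Δ) → GM Ax cut (Fm.neg A ::ₘ Γ) Δ
  | negR {Γ Δ A} : GM Ax cut (A ::ₘ Γ) Δ → GM Ax cut Γ (Fm.neg A ::ₘ Δ)
  | andL {Γ Δ A B} : GM Ax cut (A ::ₘ B ::ₘ Γ) Δ → GM Ax cut (Fm.and A B ::ₘ Γ) Δ
  | andR {Γ Δ A B} : GM Ax cut Γ (A ::ₘ Δ) → GM Ax cut Γ (B ::ₘ Δ) →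
      GM Ax cut Γ (Fm.and A B ::ₘ Δ)
  | orL {Γ Δ A B} : GM Ax cut (A ::ₘ Γ) Δ → GM Ax cut (B ::ₘ Γ) Δ →
      GM Ax cut (Fm.or A B ::ₘ Γ) Δ
  | orR {Γ Δ A B} : GM Ax cut Γ (A ::ₘ B ::ₘ Δ) → GM Ax cut Γ (Fm.or A B ::ₘ Δ)
  | impL {Γ Δ A B} : GM Ax cut (B ::ₘ Γ) Δ → GM Ax cut Γ (A ::ₘ Δ) →
      GM Ax cut (Fm.imp A B ::ₘ Γ) Δ
  | impR {Γ Δ A B} : GM Ax cut (A ::ₘ Γ) (B ::ₘ Δ) → GM Ax cut Γ (Fm.imp A B ::ₘ Δ)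
  | wkL {Γ Δ A} : GM Ax cut Γ Δ → GM Ax cut (A ::ₘ Γ) Δ
  | wkR {Γ Δ A} : GM Ax cut Γ Δ → GM Ax cut Γ (A ::ₘ Δ)
  | conL {Γ Δ A} : GM Ax cut (A ::ₘ A ::ₘ Γ) Δ → GM Ax cut (A ::ₘ Γ) Δ
  | conR {Γ Δ A} : GM Ax cut Γ (A ::ₘ A ::ₘ Δ) → GM Ax cut Γ (A ::ₘ Δ)
  | ruleM {A B} : Ax.c = false →
      GM Ax cut {A} {B} → GM Ax cut {Fm.box A} {Fm.box B}
  | ruleC {Γ : Multiset Fm} {A} : Ax.c = true → Γ ≠ 0 →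
      GM Ax cut Γ {A} → GM Ax cut (Γ.map Fm.box) {Fm.box A}
  | ruleN {A} : (Ax.n = true ∨ Ax.five = true) →
      GM Ax cut 0 {A} → GM Ax cut 0 {Fm.box A}
  | ruleP {A} : Ax.p = true →
      GM Ax cut {A} 0 → GM Ax cut {Fm.box A} 0
  | ruleD {A B} : Ax.d = true →
      GM Ax cut {A, B} 0 → GM Ax cut {Fm.box A, Fm.box B} 0
  | ruleT {Γ Δ A} : Ax.t = true →
      GM Ax cut (A ::ₘ Γ) Δ → GM Ax cut (Fm.box A ::ₘ Γ) Δ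
  | rule4 {A B} : Ax.four = true →
      GM Ax cut {Fm.box A} {B} → GM Ax cut {Fm.box A} {Fm.box B}
  | rule5 {A B} : Ax.five = true →
      GM Ax cut 0 {A, Fm.box B} → GM Ax cut 0 {Fm.box A, Fm.box B}
  | ruleD4 {A B} : Ax.c = false → Ax.four = true →
      (Ax.d = true ∨ (Ax.p = true ∧ Ax.five = true)) →
      GM Ax cut {A, Fm.box B} 0 → GM Ax cut {Fm.box A, Fm.box B} 0
  | ruleD5 {A B} : Ax.c = false → Ax.five = true →
      (Ax.d = true ∨ (Ax.p = true ∧ Ax.four = true)) →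
      GM Ax cut {A} {Fm.box B} → GM Ax cut {Fm.box A} {Fm.box B}
  | ruleCD {Γ : Multiset Fm} : Ax.c = true → (Ax.p = true ∨ Ax.d = true) →
      GM Ax cut Γ 0 → GM Ax cut (Γ.map Fm.box) 0
  | ruleC4 {Γ Sg : Multiset Fm} {B} : Ax.c = true → Ax.four = true →
      Γ + Sg ≠ 0 →
      GM Ax cut (Γ.map Fm.box + Sg) {B} →
      GM Ax cut (Γ.map Fm.box + Sg.map Fm.box) {Fm.box B}
  | ruleCD4 {Γ Sg : Multiset Fm} : Ax.c = true → Ax.four = true →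
      (Ax.p = true ∨ Ax.d = true) →
      GM Ax cut (Γ.map Fm.box + Sg) 0 →
      GM Ax cut (Γ.map Fm.box + Sg.map Fm.box) 0
  | ruleK4 {Γ Sg : Multiset Fm} {A} : Ax.c = true → Ax.n = true → Ax.four = true →
      GM Ax cut (Γ.map Fm.box + Sg) {A} →
      GM Ax cut (Γ.map Fm.box + Sg.map Fm.box) {Fm.box A}
  | ruleK45 {Γ Sg Δ : Multiset Fm} {A} : Ax.c = true → Ax.n = true →
      Ax.four = true → Ax.five = true →
      GM Ax cut (Γ.map Fm.box + Sg) (A ::ₘ Δ.map Fm.box) →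
      GM Ax cut (Γ.map Fm.box + Sg.map Fm.box) (Fm.box A ::ₘ Δ.map Fm.box)
  | ruleKD45 {Γ Sg Δ : Multiset Fm} : Ax.c = true → Ax.n = true →
      Ax.four = true → Ax.five = true → (Ax.p = true ∨ Ax.d = true) →
      GM Ax cut (Γ.map Fm.box + Sg) (Δ.map Fm.box) →
      GM Ax cut (Γ.map Fm.box + Sg.map Fm.box) (Δ.map Fm.box)
  | mcut {Γ Δ Sg Pp : Multiset Fm} {A} {nn mm : ℕ} : cut = true →
      1 ≤ nn → 1 ≤ mm →
      GM Ax cut Γ (Δ + Multiset.replicate nn A) →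
      GM Ax cut (Sg + Multiset.replicate mm A) Pp →
      GM Ax cut (Γ + Sg) (Δ + Pp)

/-!
Read from conclusion to premise, every modal rule of `G_M𝒜ConW` except `T` replaces a left-hand
side `Θ` consisting of boxed formulas by a multiset `F` obtained from `Θ` by deleting some outermost
boxes. The relation `Unboxing Ax Θ F` describes these pairs, and both directions rest on it.

* Soundness: `Unboxing Ax Θ F` makes `⋀Θ → □⋀F` a theorem of `M𝒜`, so the modal rules reduce to
  monotonicity of `□` together with the axioms `P` and `D`.
* Completeness: in the canonical model a world is a maximal unprovable pair of sets of formulas,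
  and its neighbourhoods are generated by the unboxings of its left-hand side. Maximality, unlike
  maximal consistency, makes no use of cut: the two sets need not be complementary, which is why
  the truth lemma consists of two separate implications.
-/

section Unboxing

variable {Ax : MAx} {Θ Θ' F F' : Multiset Fm}

/-- `Unboxing Ax Θ F`: the multiset `F` can be the left-hand side of the premise of a modal rule
whose conclusion has left-hand side `Θ`. A formula keeps its box only in the presence of `4`,
several formulas are combined only in the presence of `C`, and no formula is allowed only in the
presence of `N`. -/
inductive Unboxing (Ax : MAx) : Multiset Fm → Multiset Fm → Prop
  | nil : Ax.n = true → Unboxing Ax 0 0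
  | unbox (A : Fm) : Unboxing Ax {.box A} {A}
  | keep (A : Fm) : Ax.four = true → Unboxing Ax {.box A} {.box A}
  | add {Θ Θ' F F' : Multiset Fm} : Ax.c = true → Unboxing Ax Θ F → Unboxing Ax Θ' F' →
      Unboxing Ax (Θ + Θ') (F + F')

namespace Unboxing

theorem mem_or_box_mem (h : Unboxing Ax Θ F) : ∀ A ∈ F, A ∈ Θ ∨ .box A ∈ Θ := by
  induction h with
  | nil => simp
  | unbox | keep => simp
  | add _ _ _ ih ih' =>
    intro A hA
    rcases Multiset.mem_add.1 hA with hA | hA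
    · exact (ih A hA).imp (fun h ↦ by simp [h]) (fun h ↦ by simp [h])
    · exact (ih' A hA).imp (fun h ↦ by simp [h]) (fun h ↦ by simp [h])

theorem self (h4 : Ax.four = true) (h : Unboxing Ax Θ F) : Unboxing Ax Θ Θ := by
  induction h with
  | nil hn => exact .nil hn
  | unbox A | keep A => exact .keep A h4
  | add hc _ _ ih ih' => exact .add hc ih ih'

theorem map (hc : Ax.c = true) {f : Fm → Fm} (hf : ∀ A, Unboxing Ax {.box A} {f A})
    {Γ : Multiset Fm} (hΓ : Γ ≠ 0) : Unboxing Ax (Γ.map .box) (Γ.map f) := by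
  induction Γ using Multiset.induction_on with
  | empty => exact absurd rfl hΓ
  | cons A Γ ih =>
    rcases eq_or_ne Γ 0 with rfl | hΓ'
    · exact hf A
    · simpa only [Multiset.map_cons, Multiset.singleton_add] using
        Unboxing.add hc (hf A) (ih hΓ')

theorem map_box_self (hc : Ax.c = true) {Γ : Multiset Fm} (hΓ : Γ ≠ 0) :
    Unboxing Ax (Γ.map .box) Γ := by
  simpa only [Multiset.map_id] using map hc (f := id) .unbox hΓ

theorem map_box_add (hc : Ax.c = true) (h4 : Ax.four = true) {Γ Sg : Multiset Fm}
    (h0 : Γ + Sg ≠ 0) : Unboxing Ax (Γ.map .box + Sg.map .box) (Γ.map .box + Sg) := by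
  rcases eq_or_ne Γ 0 with rfl | hΓ
  · simpa only [Multiset.map_zero, zero_add] using map_box_self hc (by simpa using h0)
  have keepΓ : Unboxing Ax (Γ.map .box) (Γ.map .box) := map hc (fun A ↦ .keep A h4) hΓ
  rcases eq_or_ne Sg 0 with rfl | hSg
  · simpa only [Multiset.map_zero, add_zero] using keepΓ
  · exact .add hc keepΓ (map_box_self hc hSg)

theorem exists_eq_map_box_add (h : Unboxing Ax Θ F) :
    ∃ Γ Sg : Multiset Fm, Θ = Γ.map .box + Sg.map .box ∧ F = Γ.map .box + Sg ∧
      (Γ = 0 ∨ Ax.four = true) ∧ (Γ + Sg = 0 → Ax.n = true) := by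
  induction h with
  | nil hn => exact ⟨0, 0, by simp [hn]⟩
  | unbox A => exact ⟨0, {A}, by simp⟩
  | keep A h4 => exact ⟨{A}, 0, by simp [h4]⟩
  | add _ _ _ ih ih' =>
    obtain ⟨Γ, Sg, rfl, rfl, h4, hn⟩ := ih
    obtain ⟨Γ', Sg', rfl, rfl, h4', -⟩ := ih'
    refine ⟨Γ + Γ', Sg + Sg', ?_, ?_, ?_, fun h0 ↦ hn ?_⟩
    · simp only [Multiset.map_add]; abel
    · simp only [Multiset.map_add]; abel
    · rcases h4 with rfl | h4
      · simpa only [zero_add] using h4'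
      · exact .inr h4
    · simp only [add_eq_zero] at h0 ⊢
      exact ⟨h0.1.1, h0.2.1⟩

end Unboxing

end Unboxing

namespace GM

variable {Ax : MAx} {cut : Bool} {Γ Δ Γ' Δ' Θ Θ' F F' : Multiset Fm} {A : Fm}

section Structural

theorem add_left (Γ' : Multiset Fm) (h : GM Ax cut Γ Δ) : GM Ax cut (Γ' + Γ) Δ := by
  induction Γ' using Multiset.induction_on with
  | empty => rwa [zero_add]
  | cons A Γ' ih => exact Multiset.cons_add A Γ' Γ ▸ ih.wkL

theorem add_right (Δ' : Multiset Fm) (h : GM Ax cut Γ Δ) : GM Ax cut Γ (Δ' + Δ) := by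
  induction Δ' using Multiset.induction_on with
  | empty => rwa [zero_add]
  | cons A Δ' ih => exact Multiset.cons_add A Δ' Δ ▸ ih.wkR

theorem contract_left (h : GM Ax cut (Γ' + Γ) Δ) (hΓ : Γ ⊆ Γ') : GM Ax cut Γ' Δ := by
  induction Γ using Multiset.induction_on with
  | empty => rwa [add_zero] at h
  | cons A Γ ih =>
    obtain ⟨hA, hΓ⟩ := Multiset.cons_subset.1 hΓ
    obtain ⟨Γ', rfl⟩ := Multiset.exists_cons_of_mem hA
    rw [Multiset.add_cons, Multiset.cons_add] at h
    exact ih (Multiset.cons_add A Γ' Γ ▸ h.conL) hΓ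

theorem contract_right (h : GM Ax cut Γ (Δ' + Δ)) (hΔ : Δ ⊆ Δ') : GM Ax cut Γ Δ' := by
  induction Δ using Multiset.induction_on with
  | empty => rwa [add_zero] at h
  | cons A Δ ih =>
    obtain ⟨hA, hΔ⟩ := Multiset.cons_subset.1 hΔ
    obtain ⟨Δ', rfl⟩ := Multiset.exists_cons_of_mem hA
    rw [Multiset.add_cons, Multiset.cons_add] at h
    exact ih (Multiset.cons_add A Δ' Δ ▸ h.conR) hΔ

theorem mono (h : GM Ax cut Γ Δ) (hΓ : Γ ⊆ Γ') (hΔ : Δ ⊆ Δ') : GM Ax cut Γ' Δ' :=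
  contract_left (contract_right ((h.add_left Γ').add_right Δ') hΔ) hΓ

end Structural

section Modal

theorem box_of_unboxing (hu : Unboxing Ax Θ F) (h : GM Ax cut F {A}) :
    GM Ax cut Θ {.box A} := by
  cases hc : Ax.c with
  | false =>
    cases hu with
    | nil hn => exact .ruleN (.inl hn) h
    | unbox => exact .ruleM hc h
    | keep _ h4 => exact .rule4 h4 h
    | add hc' => simp [hc] at hc'
  | true =>
    obtain ⟨Γ, Sg, rfl, rfl, h4, hn⟩ := hu.exists_eq_map_box_add
    by_cases h0 : Γ + Sg = 0
    · obtain ⟨rfl, rfl⟩ := add_eq_zero.1 h0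
      exact .ruleN (.inl (hn h0)) h
    · rcases h4 with rfl | h4
      · simp only [Multiset.map_zero, zero_add] at h h0 ⊢
        exact .ruleC hc h0 h
      · exact .ruleC4 hc h4 h0 h

theorem empty_of_unboxing (hpd : Ax.p = true ∨ Ax.d = true) (hu : Unboxing Ax Θ F)
    (h : GM Ax cut F 0) : GM Ax cut Θ 0 := by
  cases hu with
  | nil => exact h
  | unbox A =>
    rcases hpd with hp | hd
    · exact .ruleP hp h
    · exact .conL (.ruleD hd h.wkL)
  | keep => exact h
  | add hc hu hu' =>
    obtain ⟨Γ, Sg, hΘ, hF, h4, -⟩ := (Unboxing.add hc hu hu').exists_eq_map_box_add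
    rw [hF] at h
    rw [hΘ]
    rcases h4 with rfl | h4
    · simp only [Multiset.map_zero, zero_add] at h ⊢
      exact .ruleCD hc hpd h
    · exact .ruleCD4 hc h4 hpd h

theorem empty_of_unboxing_add (hd : Ax.d = true) (hu : Unboxing Ax Θ F)
    (hu' : Unboxing Ax Θ' F') (h : GM Ax cut (F + F') 0) : GM Ax cut (Θ + Θ') 0 := by
  cases hc : Ax.c with
  | true => exact empty_of_unboxing (.inr hd) (.add hc hu hu') h
  | false =>
    cases hu with
    | nil =>
      rw [zero_add] at h ⊢
      exact empty_of_unboxing (.inr hd) hu' h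
    | add hc' => simp [hc] at hc'
    | unbox A =>
      cases hu' with
      | nil => exact empty_of_unboxing (.inr hd) (.unbox A) h
      | unbox => exact .ruleD hd h
      | keep _ h4 => exact .ruleD4 hc h4 (.inl hd) h
      | add hc' => simp [hc] at hc'
    | keep A h4 =>
      cases hu' with
      | nil => exact h
      | unbox B =>
        rw [add_comm] at h ⊢
        exact .ruleD4 hc h4 (.inl hd) h
      | keep => exact h
      | add hc' => simp [hc] at hc'

end Modal

end GM

section CanonicalModel

variable {Ax : MAx} {cut : Bool}

/-- The sequent `Γ ⇒ Δ` becomes derivable after adding finitely many formulas of the set `X` of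
signed formulas, where `.inl A` and `.inr A` stand for `A` on the left and on the right. -/
def DerivableOver (Ax : MAx) (cut : Bool) (X : Set (Fm ⊕ Fm)) (Γ Δ : Multiset Fm) : Prop :=
  ∃ Γ' Δ' : Multiset Fm, (∀ A ∈ Γ', .inl A ∈ X) ∧ (∀ A ∈ Δ', .inr A ∈ X) ∧
    GM Ax cut (Γ + Γ') (Δ + Δ')

namespace DerivableOver

variable {X Y : Set (Fm ⊕ Fm)} {Γ Δ Γ₁ Δ₁ Γ₂ Δ₂ : Multiset Fm}

theorem map (h₁ : DerivableOver Ax cut X Γ₁ Δ₁)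
    (rule : ∀ Γ' Δ', GM Ax cut (Γ₁ + Γ') (Δ₁ + Δ') → GM Ax cut (Γ + Γ') (Δ + Δ')) :
    DerivableOver Ax cut X Γ Δ := by
  obtain ⟨Γ', Δ', hΓ', hΔ', h⟩ := h₁
  exact ⟨Γ', Δ', hΓ', hΔ', rule Γ' Δ' h⟩

theorem map₂ (h₁ : DerivableOver Ax cut X Γ₁ Δ₁) (h₂ : DerivableOver Ax cut X Γ₂ Δ₂)
    (rule : ∀ Γ' Δ', GM Ax cut (Γ₁ + Γ') (Δ₁ + Δ') → GM Ax cut (Γ₂ + Γ') (Δ₂ + Δ') →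
      GM Ax cut (Γ + Γ') (Δ + Δ')) :
    DerivableOver Ax cut X Γ Δ := by
  obtain ⟨Γ₁', Δ₁', hΓ₁, hΔ₁, d₁⟩ := h₁
  obtain ⟨Γ₂', Δ₂', hΓ₂, hΔ₂, d₂⟩ := h₂
  refine ⟨Γ₁' + Γ₂', Δ₁' + Δ₂', ?_, ?_, rule _ _ ?_ ?_⟩
  · simpa only [Multiset.mem_add, or_imp, forall_and] using ⟨hΓ₁, hΓ₂⟩
  · simpa only [Multiset.mem_add, or_imp, forall_and] using ⟨hΔ₁, hΔ₂⟩
  · rw [← add_assoc, ← add_assoc]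
    exact d₁.mono (Multiset.subset_of_le (Multiset.le_add_right _ _))
      (Multiset.subset_of_le (Multiset.le_add_right _ _))
  · rw [add_left_comm, add_left_comm Δ₂]
    exact d₂.mono (Multiset.subset_of_le (Multiset.le_add_left _ _))
      (Multiset.subset_of_le (Multiset.le_add_left _ _))

theorem mono (hXY : X ⊆ Y) (h : DerivableOver Ax cut X Γ Δ) : DerivableOver Ax cut Y Γ Δ := by
  obtain ⟨Γ', Δ', hΓ', hΔ', h⟩ := h
  exact ⟨Γ', Δ', fun A hA ↦ hXY (hΓ' A hA), fun A hA ↦ hXY (hΔ' A hA), h⟩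

theorem absorb (hΓ : ∀ A ∈ Γ, .inl A ∈ X) (hΔ : ∀ A ∈ Δ, .inr A ∈ X)
    (h : DerivableOver Ax cut X Γ Δ) : DerivableOver Ax cut X 0 0 := by
  obtain ⟨Γ', Δ', hΓ', hΔ', h⟩ := h
  refine ⟨Γ + Γ', Δ + Δ', ?_, ?_, by simpa only [zero_add] using h⟩
  · simpa only [Multiset.mem_add, or_imp, forall_and] using ⟨hΓ, hΓ'⟩
  · simpa only [Multiset.mem_add, or_imp, forall_and] using ⟨hΔ, hΔ'⟩

theorem of_insert (s : Fm ⊕ Fm) (h : DerivableOver Ax cut (insert s X) 0 0) :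
    DerivableOver Ax cut X (s.elim ({·}) 0) (s.elim 0 ({·})) := by
  classical
  obtain ⟨Γ', Δ', hΓ', hΔ', h⟩ := h
  refine ⟨Γ'.filter (.inl · ∈ X), Δ'.filter (.inr · ∈ X),
    fun A hA ↦ (Multiset.mem_filter.1 hA).2, fun A hA ↦ (Multiset.mem_filter.1 hA).2, h.mono ?_ ?_⟩
  · intro A hA
    rw [zero_add] at hA
    rcases hΓ' A hA with rfl | hX
    · simp
    · simp [hA, hX]
  · intro A hA
    rw [zero_add] at hA
    rcases hΔ' A hA with rfl | hX
    · simp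
    · simp [hA, hX]

theorem isOfFiniteCharacter_not :
    Order.IsOfFiniteCharacter {X | ¬ DerivableOver Ax cut X 0 0} := by
  refine fun X ↦ ⟨fun hX Y hYX _ hY ↦ hX (hY.mono hYX), fun hX ⟨Γ, Δ, hΓ, hΔ, h⟩ ↦ ?_⟩
  let Y : Set (Fm ⊕ Fm) := .inl '' {A | A ∈ Γ} ∪ .inr '' {A | A ∈ Δ}
  have hYX : Y ⊆ X := by
    rintro _ (⟨A, hA, rfl⟩ | ⟨A, hA, rfl⟩)
    exacts [hΓ A hA, hΔ A hA]
  have hYfin : Y.Finite := (Γ.finite_toSet.image _).union (Δ.finite_toSet.image _)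
  exact hX Y hYX hYfin
    ⟨Γ, Δ, fun A hA ↦ .inl ⟨A, hA, rfl⟩, fun A hA ↦ .inr ⟨A, hA, rfl⟩, h⟩

end DerivableOver

/-- A world of the canonical model: a maximal set of signed formulas from which no derivable
sequent can be formed. -/
structure World (Ax : MAx) (cut : Bool) where
  signed : Set (Fm ⊕ Fm)
  maximal : Maximal (· ∈ {X | ¬ DerivableOver Ax cut X 0 0}) signed

namespace World

variable {w : World Ax cut} {Γ Δ : Multiset Fm} {A B : Fm}

/-- The formulas on the left of a world. -/
def left (w : World Ax cut) : Set Fm := {A | .inl A ∈ w.signed}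

/-- The formulas on the right of a world. -/
def right (w : World Ax cut) : Set Fm := {A | .inr A ∈ w.signed}

theorem exists_of_not_derivable (h : ¬ GM Ax cut Γ Δ) :
    ∃ w : World Ax cut, (∀ A ∈ Γ, A ∈ w.left) ∧ ∀ A ∈ Δ, A ∈ w.right := by
  let X : Set (Fm ⊕ Fm) := {s | s.elim (· ∈ Γ) (· ∈ Δ)}
  have hX : ¬ DerivableOver Ax cut X 0 0 := by
    rintro ⟨Γ', Δ', hΓ', hΔ', h'⟩
    rw [zero_add, zero_add] at h'
    exact h (h'.mono hΓ' hΔ')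
  obtain ⟨Y, hXY, hY⟩ := DerivableOver.isOfFiniteCharacter_not.exists_maximal hX
  exact ⟨⟨Y, hY⟩, fun A hA ↦ hXY (show .inl A ∈ X from hA),
    fun A hA ↦ hXY (show .inr A ∈ X from hA)⟩

theorem not_derivableOver (hΓ : ∀ A ∈ Γ, A ∈ w.left) (hΔ : ∀ A ∈ Δ, A ∈ w.right) :
    ¬ DerivableOver Ax cut w.signed Γ Δ :=
  fun h ↦ w.maximal.prop (h.absorb hΓ hΔ)

theorem not_derivable (hΓ : ∀ A ∈ Γ, A ∈ w.left) (hΔ : ∀ A ∈ Δ, A ∈ w.right) :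
    ¬ GM Ax cut Γ Δ :=
  fun h ↦ not_derivableOver hΓ hΔ ⟨0, 0, by simp, by simp, by simpa only [add_zero] using h⟩

theorem derivableOver_of_notMem {s : Fm ⊕ Fm} (hs : s ∉ w.signed) :
    DerivableOver Ax cut w.signed (s.elim ({·}) 0) (s.elim 0 ({·})) := by
  refine .of_insert s (not_not.1 fun h ↦ hs ?_)
  exact w.maximal.mem_of_prop_insert h

theorem derivableOver_left (hA : A ∉ w.left) : DerivableOver Ax cut w.signed {A} 0 :=
  derivableOver_of_notMem (s := .inl A) hA

theorem derivableOver_right (hA : A ∉ w.right) : DerivableOver Ax cut w.signed 0 {A} :=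
  derivableOver_of_notMem (s := .inr A) hA

theorem mem_left_of_rule (hΓ : ∀ A ∈ Γ, A ∈ w.left) (hΔ : ∀ A ∈ Δ, A ∈ w.right)
    (rule : ∀ Γ' Δ', GM Ax cut (A ::ₘ Γ') Δ' → GM Ax cut (Γ + Γ') (Δ + Δ')) : A ∈ w.left := by
  by_contra hA
  refine not_derivableOver hΓ hΔ ((derivableOver_left hA).map fun Γ' Δ' h ↦ rule Γ' Δ' ?_)
  simpa only [Multiset.singleton_add, zero_add] using h

theorem mem_right_of_rule (hΓ : ∀ A ∈ Γ, A ∈ w.left) (hΔ : ∀ A ∈ Δ, A ∈ w.right)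
    (rule : ∀ Γ' Δ', GM Ax cut Γ' (A ::ₘ Δ') → GM Ax cut (Γ + Γ') (Δ + Δ')) : A ∈ w.right := by
  by_contra hA
  refine not_derivableOver hΓ hΔ ((derivableOver_right hA).map fun Γ' Δ' h ↦ rule Γ' Δ' ?_)
  simpa only [Multiset.singleton_add, zero_add] using h

section Saturation

theorem var_notMem_right {n : ℕ} (h : .var n ∈ w.left) : .var n ∉ w.right := fun h' ↦
  not_derivable (Γ := {.var n}) (Δ := {.var n}) (by simpa using h) (by simpa using h') .init

theorem bot_notMem_left : .bot ∉ w.left := fun h ↦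
  not_derivable (Γ := {.bot}) (Δ := 0) (by simpa using h) (by simp) .botL

theorem top_notMem_right : .top ∉ w.right := fun h ↦
  not_derivable (Γ := 0) (Δ := {.top}) (by simp) (by simpa using h) .topR

theorem mem_right_of_neg_mem_left (h : .neg A ∈ w.left) : A ∈ w.right :=
  mem_right_of_rule (Γ := {.neg A}) (Δ := 0) (by simpa using h) (by simp)
    fun _ _ d ↦ by simpa using .negL d

theorem mem_left_of_neg_mem_right (h : .neg A ∈ w.right) : A ∈ w.left :=
  mem_left_of_rule (Γ := 0) (Δ := {.neg A}) (by simp) (by simpa using h)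
    fun _ _ d ↦ by simpa using .negR d

theorem and_mem_left (h : .and A B ∈ w.left) : A ∈ w.left ∧ B ∈ w.left := by
  have hΓ : ∀ C ∈ ({.and A B} : Multiset Fm), C ∈ w.left := by simpa using h
  constructor
  · refine mem_left_of_rule (Δ := 0) hΓ (by simp) fun _ _ d ↦ ?_
    simpa using .andL (Multiset.cons_swap A B _ ▸ d.wkL)
  · refine mem_left_of_rule (Δ := 0) hΓ (by simp) fun _ _ d ↦ ?_
    simpa using .andL d.wkL

theorem and_mem_right (h : .and A B ∈ w.right) : A ∈ w.right ∨ B ∈ w.right := by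
  by_contra! ⟨hA, hB⟩
  refine not_derivableOver (Γ := 0) (Δ := {.and A B}) (by simp) (by simpa using h) <|
    (derivableOver_right hA).map₂ (derivableOver_right hB) fun _ _ dA dB ↦ ?_
  exact .andR dA dB

theorem or_mem_left (h : .or A B ∈ w.left) : A ∈ w.left ∨ B ∈ w.left := by
  by_contra! ⟨hA, hB⟩
  refine not_derivableOver (Γ := {.or A B}) (Δ := 0) (by simpa using h) (by simp) <|
    (derivableOver_left hA).map₂ (derivableOver_left hB) fun _ _ dA dB ↦ ?_
  exact .orL dA dB

theorem or_mem_right (h : .or A B ∈ w.right) : A ∈ w.right ∧ B ∈ w.right := by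
  have hΔ : ∀ C ∈ ({.or A B} : Multiset Fm), C ∈ w.right := by simpa using h
  constructor
  · refine mem_right_of_rule (Γ := 0) (by simp) hΔ fun _ _ d ↦ ?_
    simpa using .orR (Multiset.cons_swap A B _ ▸ d.wkR)
  · refine mem_right_of_rule (Γ := 0) (by simp) hΔ fun _ _ d ↦ ?_
    simpa using .orR d.wkR

theorem imp_mem_left (h : .imp A B ∈ w.left) : A ∈ w.right ∨ B ∈ w.left := by
  by_contra! ⟨hA, hB⟩
  refine not_derivableOver (Γ := {.imp A B}) (Δ := 0) (by simpa using h) (by simp) <|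
    (derivableOver_right hA).map₂ (derivableOver_left hB) fun Γ' Δ' dA dB ↦ ?_
  simp only [Multiset.singleton_add, zero_add] at dA dB ⊢
  exact .impL dB dA

theorem imp_mem_right (h : .imp A B ∈ w.right) : A ∈ w.left ∧ B ∈ w.right := by
  have hΔ : ∀ C ∈ ({.imp A B} : Multiset Fm), C ∈ w.right := by simpa using h
  constructor
  · refine mem_left_of_rule (Γ := 0) (by simp) hΔ fun _ _ d ↦ ?_
    simpa using .impR d.wkR
  · refine mem_right_of_rule (Γ := 0) (by simp) hΔ fun _ _ d ↦ ?_
    simpa using .impR d.wkL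

theorem mem_left_of_box_mem_left (hT : Ax.t = true) (h : .box A ∈ w.left) : A ∈ w.left :=
  mem_left_of_rule (Γ := {.box A}) (Δ := 0) (by simpa using h) (by simp)
    fun _ _ d ↦ by simpa using .ruleT hT d

end Saturation

/-- Truth at a world of the canonical model: `□A` holds when an unboxing of finitely many formulas
on the left of the world generates a neighbourhood of worlds at which `A` holds. -/
def Sat : World Ax cut → Fm → Prop
  | w, .var n => .var n ∈ w.left
  | _, .bot => False
  | _, .top => True
  | w, .neg A => ¬ w.Sat A
  | w, .and A B => w.Sat A ∧ w.Sat B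
  | w, .or A B => w.Sat A ∨ w.Sat B
  | w, .imp A B => w.Sat A → w.Sat B
  | w, .box A => ∃ Θ F : Multiset Fm, (∀ B ∈ Θ, B ∈ w.left) ∧ Unboxing Ax Θ F ∧
      ∀ v : World Ax cut, (∀ B ∈ F, B ∈ v.left) → v.Sat A

theorem evalP_sat (w : World Ax cut) (A : Fm) : evalP w.Sat A ↔ w.Sat A := by
  induction A <;> simp_all only [evalP, Sat]

theorem mem_left_add {Θ Θ' : Multiset Fm} (h : ∀ A ∈ Θ, A ∈ w.left) (h' : ∀ A ∈ Θ', A ∈ w.left) :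
    ∀ A ∈ Θ + Θ', A ∈ w.left := fun A hA ↦
  (Multiset.mem_add.1 hA).elim (h A) (h' A)

theorem sat_box_and (hc : Ax.c = true) (hA : w.Sat (.box A)) (hB : w.Sat (.box B)) :
    w.Sat (.box (.and A B)) := by
  obtain ⟨Θ, F, hΘ, hu, hF⟩ := hA
  obtain ⟨Θ', F', hΘ', hu', hF'⟩ := hB
  exact ⟨Θ + Θ', F + F', mem_left_add hΘ hΘ', .add hc hu hu', fun v hv ↦
    ⟨hF v fun C hC ↦ hv C (Multiset.mem_add.2 (.inl hC)),
      hF' v fun C hC ↦ hv C (Multiset.mem_add.2 (.inr hC))⟩⟩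

theorem not_sat_box_bot (hp : Ax.p = true) : ¬ w.Sat (.box .bot) := by
  rintro ⟨Θ, F, hΘ, hu, hF⟩
  have hF0 : ¬ GM Ax cut F 0 := fun d ↦
    not_derivable hΘ (by simp) (d.empty_of_unboxing (.inl hp) hu)
  obtain ⟨v, hv, -⟩ := exists_of_not_derivable hF0
  exact hF v hv

theorem not_sat_box_neg (hd : Ax.d = true) (hA : w.Sat (.box A)) : ¬ w.Sat (.box (.neg A)) := by
  rintro ⟨Θ', F', hΘ', hu', hF'⟩
  obtain ⟨Θ, F, hΘ, hu, hF⟩ := hA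
  have hF0 : ¬ GM Ax cut (F + F') 0 := fun d ↦
    not_derivable (mem_left_add hΘ hΘ') (by simp) (d.empty_of_unboxing_add hd hu hu')
  obtain ⟨v, hv, -⟩ := exists_of_not_derivable hF0
  exact hF' v (fun C hC ↦ hv C (Multiset.mem_add.2 (.inr hC)))
    (hF v fun C hC ↦ hv C (Multiset.mem_add.2 (.inl hC)))

theorem sat_of_sat_box (hT : Ax.t = true) (h : w.Sat (.box A)) : w.Sat A := by
  obtain ⟨Θ, F, hΘ, hu, hF⟩ := h
  exact hF w fun B hB ↦ (hu.mem_or_box_mem B hB).elim (hΘ B)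
    fun hB ↦ mem_left_of_box_mem_left hT (hΘ _ hB)

theorem sat_box_box (h4 : Ax.four = true) (h : w.Sat (.box A)) : w.Sat (.box (.box A)) := by
  obtain ⟨Θ, F, hΘ, hu, hF⟩ := h
  exact ⟨Θ, Θ, hΘ, hu.self h4, fun v hv ↦ ⟨Θ, F, hv, hu, hF⟩⟩

theorem sat_of_mThm (h5 : Ax.five = false) (h : MThm Ax A) (w : World Ax cut) : w.Sat A := by
  induction h generalizing w with
  | taut h => exact (evalP_sat w _).1 (h _)
  | mp _ _ ihAB ihA => exact ihAB w (ihA w)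
  | cong _ _ ih => exact fun ⟨Θ, F, hΘ, hu, hF⟩ ↦ ⟨Θ, F, hΘ, hu, fun v hv ↦ ih v (hF v hv)⟩
  | axM =>
    exact fun ⟨Θ, F, hΘ, hu, hF⟩ ↦
      ⟨⟨Θ, F, hΘ, hu, fun v hv ↦ (hF v hv).1⟩, ⟨Θ, F, hΘ, hu, fun v hv ↦ (hF v hv).2⟩⟩
  | axC hc => exact fun h ↦ sat_box_and hc h.1 h.2
  | axN hn => exact ⟨0, 0, by simp, .nil hn, fun _ _ ↦ trivial⟩
  | axP hp => exact not_sat_box_bot hp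
  | axD hd => exact fun h ↦ not_sat_box_neg hd h.1 h.2
  | axT hT => exact sat_of_sat_box hT
  | ax4 h4 => exact sat_box_box h4
  | ax5 h => simp [h5] at h

theorem sat_box_of_mem_left (hA : ∀ v : World Ax cut, A ∈ v.left → v.Sat A)
    (h : .box A ∈ w.left) : w.Sat (.box A) :=
  ⟨{.box A}, {A}, by simpa using h, .unbox A, fun v hv ↦ hA v (hv A (by simp))⟩

theorem not_sat_box_of_mem_right (hA : ∀ v : World Ax cut, A ∈ v.right → ¬ v.Sat A)
    (h : .box A ∈ w.right) : ¬ w.Sat (.box A) := by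
  rintro ⟨Θ, F, hΘ, hu, hF⟩
  have hFA : ¬ GM Ax cut F {A} := fun d ↦
    not_derivable hΘ (by simpa using h) (d.box_of_unboxing hu)
  obtain ⟨v, hvF, hvA⟩ := exists_of_not_derivable hFA
  exact hA v (hvA A (by simp)) (hF v hvF)

theorem truth_lemma (A : Fm) (w : World Ax cut) :
    (A ∈ w.left → w.Sat A) ∧ (A ∈ w.right → ¬ w.Sat A) := by
  induction A generalizing w with
  | var n => exact ⟨id, fun h h' ↦ var_notMem_right h' h⟩
  | bot => exact ⟨fun h ↦ (bot_notMem_left h).elim, fun _ ↦ id⟩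
  | top => exact ⟨fun _ ↦ trivial, fun h ↦ (top_notMem_right h).elim⟩
  | neg A ih =>
    exact ⟨fun h ↦ (ih w).2 (mem_right_of_neg_mem_left h),
      fun h h' ↦ h' ((ih w).1 (mem_left_of_neg_mem_right h))⟩
  | and A B ihA ihB =>
    exact ⟨fun h ↦ (and_mem_left h).imp (ihA w).1 (ihB w).1,
      fun h h' ↦ (and_mem_right h).elim (fun hA ↦ (ihA w).2 hA h'.1) (fun hB ↦ (ihB w).2 hB h'.2)⟩
  | or A B ihA ihB =>
    exact ⟨fun h ↦ (or_mem_left h).imp (ihA w).1 (ihB w).1,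
      fun h ↦ not_or.2 ((or_mem_right h).imp (ihA w).2 (ihB w).2)⟩
  | imp A B ihA ihB =>
    exact ⟨fun h h' ↦ (imp_mem_left h).elim (fun hA ↦ ((ihA w).2 hA h').elim) (ihB w).1,
      fun h h' ↦ (ihB w).2 (imp_mem_right h).2 (h' ((ihA w).1 (imp_mem_right h).1))⟩
  | box A ih =>
    exact ⟨sat_box_of_mem_left fun v ↦ (ih v).1, not_sat_box_of_mem_right fun v ↦ (ih v).2⟩

end World

end CanonicalModel

namespace Fm

/-- A conjunction of the formulas in `Γ`, in an arbitrary order. -/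
noncomputable def conj (Γ : Multiset Fm) : Fm := Γ.toList.foldr .and .top

@[simp]
theorem evalP_conj (v : Fm → Prop) (Γ : Multiset Fm) :
    evalP v (conj Γ) ↔ ∀ A ∈ Γ, evalP v A := by
  have evalP_foldr (l : List Fm) : evalP v (l.foldr .and .top) ↔ ∀ A ∈ l, evalP v A := by
    induction l with
    | nil => simp [evalP]
    | cons A l ih => simp [evalP, ih]
  simpa only [conj, Multiset.mem_toList] using evalP_foldr Γ.toList

end Fm

section Validity

variable {Ax : MAx} {Γ Δ Θ Θ' F F' : Multiset Fm} {A B : Fm}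

/-- The filter of valuations generated by the theorems of `M𝒜`. It reduces propositional reasoning
inside `M𝒜` to reasoning about `evalP` along the filter. -/
def thmFilter (Ax : MAx) : Filter (Fm → Prop) where
  sets := {X | ∃ C, MThm Ax C ∧ ∀ v, evalP v C → v ∈ X}
  univ_sets := ⟨.top, .taut fun _ ↦ trivial, fun _ _ ↦ trivial⟩
  sets_of_superset := fun ⟨C, hC, h⟩ hXY ↦ ⟨C, hC, fun v hv ↦ hXY (h v hv)⟩
  inter_sets := fun ⟨C, hC, h⟩ ⟨D, hD, h'⟩ ↦
    have hCD : MThm Ax (.imp C (.imp D (.and C D))) := .taut fun _ c d ↦ ⟨c, d⟩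
    ⟨.and C D, .mp (.mp hCD hC) hD, fun v hv ↦ ⟨h v hv.1, h' v hv.2⟩⟩

theorem mThm_iff_eventually : MThm Ax A ↔ ∀ᶠ v in thmFilter Ax, evalP v A :=
  ⟨fun h ↦ ⟨A, h, fun _ ↦ id⟩, fun ⟨C, hC, h⟩ ↦ .mp (.taut (A := .imp C A) h) hC⟩

theorem World.of_eventually {cut : Bool} (h5 : Ax.five = false) {P : (Fm → Prop) → Prop}
    (h : ∀ᶠ v in thmFilter Ax, P v) (w : World Ax cut) : P w.Sat := by
  obtain ⟨C, hC, h⟩ := h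
  exact h _ ((w.evalP_sat C).2 (w.sat_of_mThm h5 hC))

theorem eventually_box_mono (h : ∀ᶠ v in thmFilter Ax, evalP v A → evalP v B) :
    ∀ᶠ v in thmFilter Ax, v (.box A) → v (.box B) := by
  -- `A` is equivalent to `A ∧ B`, so that congruence and the axiom `M` apply.
  have hAB : MThm Ax (.imp A (.and A B)) := mThm_iff_eventually.2 <| by
    filter_upwards [h] with v hv hA using ⟨hA, hv hA⟩
  have hBA : MThm Ax (.imp (.and A B) A) := .taut fun _ ↦ And.left
  filter_upwards [mThm_iff_eventually.1 (.cong hAB hBA),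
    mThm_iff_eventually.1 (.axM (Ax := Ax) (A := A) (B := B))] with v hcong hM hA
  exact (hM (hcong hA)).2

theorem eventually_not_box (hpd : Ax.p = true ∨ Ax.d = true)
    (h : ∀ᶠ v in thmFilter Ax, ¬ evalP v A) : ∀ᶠ v in thmFilter Ax, ¬ v (.box A) := by
  rcases hpd with hp | hd
  · have hbot : ∀ᶠ v in thmFilter Ax, v (.box A) → v (.box .bot) := eventually_box_mono h
    filter_upwards [hbot, mThm_iff_eventually.1 (.axP hp)] with v hbot hP hA using hP (hbot hA)
  · have hneg : ∀ᶠ v in thmFilter Ax, v (.box A) → v (.box (.neg A)) :=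
      eventually_box_mono (h.mono fun _ hA _ ↦ hA)
    filter_upwards [hneg, mThm_iff_eventually.1 (.axD (A := A) hd)] with v hneg hD hA
      using hD ⟨hA, hneg hA⟩

theorem eventually_not_box_and_box (hd : Ax.d = true)
    (h : ∀ᶠ v in thmFilter Ax, ¬ (evalP v A ∧ evalP v B)) :
    ∀ᶠ v in thmFilter Ax, ¬ (v (.box A) ∧ v (.box B)) := by
  have hneg : ∀ᶠ v in thmFilter Ax, v (.box B) → v (.box (.neg A)) :=
    eventually_box_mono (h.mono fun _ hAB hB hA ↦ hAB ⟨hA, hB⟩)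
  filter_upwards [hneg, mThm_iff_eventually.1 (.axD (A := A) hd)] with v hneg hD hAB
    using hD ⟨hAB.1, hneg hAB.2⟩

theorem Unboxing.eventually_box_conj (hu : Unboxing Ax Θ F) :
    ∀ᶠ v in thmFilter Ax, (∀ A ∈ Θ, evalP v A) → v (.box (.conj F)) := by
  induction hu with
  | nil hn =>
    have hmono : ∀ᶠ v in thmFilter Ax, v (.box .top) → v (.box (.conj 0)) :=
      eventually_box_mono (.of_forall fun v _ ↦ by simp)
    filter_upwards [hmono, mThm_iff_eventually.1 (.axN hn)] with v hmono hN _ using hmono hN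
  | unbox A =>
    have hmono : ∀ᶠ v in thmFilter Ax, v (.box A) → v (.box (.conj {A})) :=
      eventually_box_mono (.of_forall fun v ↦ by simp)
    filter_upwards [hmono] with v hmono hΘ using hmono (hΘ (.box A) (by simp))
  | keep A h4 =>
    have hmono : ∀ᶠ v in thmFilter Ax, v (.box (.box A)) → v (.box (.conj {.box A})) :=
      eventually_box_mono (.of_forall fun v ↦ by simp)
    filter_upwards [hmono, mThm_iff_eventually.1 (.ax4 (A := A) h4)] with v hmono h4 hΘ
      using hmono (h4 (hΘ (.box A) (by simp)))
  | @add Θ Θ' F F' hc _ _ ih ih' =>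
    have hmono : ∀ᶠ v in thmFilter Ax,
        v (.box (.and (.conj F) (.conj F'))) → v (.box (.conj (F + F'))) :=
      eventually_box_mono (.of_forall fun v ↦ by
        simp only [evalP, Fm.evalP_conj, Multiset.mem_add]
        exact fun ⟨hF, hF'⟩ A hA ↦ hA.elim (hF A) (hF' A))
    filter_upwards [hmono, ih, ih', mThm_iff_eventually.1 (.axC hc)] with v hmono hF hF' hC hΘ
    exact hmono (hC ⟨hF fun A hA ↦ hΘ A (by simp [hA]), hF' fun A hA ↦ hΘ A (by simp [hA])⟩)

/-- Validity of the sequent `Γ ⇒ Δ` in `M𝒜`, that is, theoremhood of the implication from the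
conjunction of `Γ` to the disjunction of `Δ`. -/
def Valid (Ax : MAx) (Γ Δ : Multiset Fm) : Prop :=
  ∀ᶠ v in thmFilter Ax, (∀ A ∈ Γ, evalP v A) → ∃ B ∈ Δ, evalP v B

namespace Valid

theorem box_of_unboxing (hu : Unboxing Ax Θ F) (h : Valid Ax F {A}) :
    Valid Ax Θ {.box A} := by
  have hmono : ∀ᶠ v in thmFilter Ax, v (.box (.conj F)) → v (.box A) :=
    eventually_box_mono (h.mono fun v hF ↦ by simpa using hF)
  filter_upwards [hmono, hu.eventually_box_conj] with v hmono hbox hΘ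
  exact ⟨.box A, by simp, hmono (hbox hΘ)⟩

theorem empty_of_unboxing (hpd : Ax.p = true ∨ Ax.d = true) (hu : Unboxing Ax Θ F)
    (h : Valid Ax F 0) : Valid Ax Θ 0 := by
  have hnot : ∀ᶠ v in thmFilter Ax, ¬ v (.box (.conj F)) :=
    eventually_not_box hpd (h.mono fun v hF ↦ by simpa using hF)
  filter_upwards [hnot, hu.eventually_box_conj] with v hnot hbox hΘ
  exact (hnot (hbox hΘ)).elim

theorem empty_of_unboxing_add (hd : Ax.d = true) (hu : Unboxing Ax Θ F)
    (hu' : Unboxing Ax Θ' F') (h : Valid Ax (F + F') 0) : Valid Ax (Θ + Θ') 0 := by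
  have hnot : ∀ᶠ v in thmFilter Ax, ¬ (v (.box (.conj F)) ∧ v (.box (.conj F'))) := by
    refine eventually_not_box_and_box hd (h.mono fun v hF ⟨hc, hc'⟩ ↦ ?_)
    rw [Fm.evalP_conj] at hc hc'
    simpa using hF fun A hA ↦ (Multiset.mem_add.1 hA).elim (hc A) (hc' A)
  filter_upwards [hnot, hu.eventually_box_conj, hu'.eventually_box_conj] with v hnot hbox hbox' hΘ
  exact (hnot ⟨hbox fun A hA ↦ hΘ A (by simp [hA]), hbox' fun A hA ↦ hΘ A (by simp [hA])⟩).elim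

theorem box_left (hT : Ax.t = true) (h : Valid Ax (A ::ₘ Γ) Δ) : Valid Ax (.box A ::ₘ Γ) Δ := by
  filter_upwards [h, mThm_iff_eventually.1 (.axT (A := A) hT)] with v h hT hΓ
  rw [Multiset.forall_mem_cons] at h hΓ
  exact h ⟨hT hΓ.1, hΓ.2⟩

theorem multicut {Sg Pp : Multiset Fm} {m n : ℕ}
    (h : Valid Ax Γ (Δ + Multiset.replicate n A))
    (h' : Valid Ax (Sg + Multiset.replicate m A) Pp) : Valid Ax (Γ + Sg) (Δ + Pp) := by
  filter_upwards [h, h'] with v h h' hΓSg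
  obtain ⟨B, hB, hvB⟩ := h fun C hC ↦ hΓSg C (by simp [hC])
  rcases Multiset.mem_add.1 hB with hB | hB
  · exact ⟨B, by simp [hB], hvB⟩
  obtain rfl := Multiset.eq_of_mem_replicate hB
  obtain ⟨C, hC, hvC⟩ := h' fun C hC ↦ (Multiset.mem_add.1 hC).elim
    (fun hC ↦ hΓSg C (by simp [hC])) (fun hC ↦ Multiset.eq_of_mem_replicate hC ▸ hvB)
  exact ⟨C, by simp [hC], hvC⟩

end Valid

end Validity

namespace GM

variable {Ax : MAx} {cut : Bool} {Γ Δ : Multiset Fm}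

theorem valid (h5 : Ax.five = false) (h : GM Ax cut Γ Δ) : Valid Ax Γ Δ := by
  induction h with
  | @init _ _ m => exact .of_forall fun v hΓ ↦ ⟨.var m, by simp, hΓ (.var m) (by simp)⟩
  | botL => exact .of_forall fun v hΓ ↦ (hΓ .bot (by simp)).elim
  | topR => exact .of_forall fun v _ ↦ ⟨.top, by simp, trivial⟩
  | negL _ ih | negR _ ih | andL _ ih | orR _ ih | impR _ ih | wkL _ ih | wkR _ ih
  | conL _ ih | conR _ ih =>
    filter_upwards [ih] with v h
    simp only [Multiset.mem_cons, forall_eq_or_imp, exists_eq_or_imp, evalP] at h ⊢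
    tauto
  | andR _ _ ih ih' | orL _ _ ih ih' | impL _ _ ih ih' =>
    filter_upwards [ih, ih'] with v h h'
    simp only [Multiset.mem_cons, forall_eq_or_imp, exists_eq_or_imp, evalP] at h h' ⊢
    tauto
  | ruleM _ _ ih => exact .box_of_unboxing (.unbox _) ih
  | ruleC hc h0 _ ih => exact .box_of_unboxing (.map_box_self hc h0) ih
  | ruleN hn _ ih => exact .box_of_unboxing (.nil (by simpa [h5] using hn)) ih
  | ruleP hp _ ih => exact .empty_of_unboxing (.inl hp) (.unbox _) ih
  | ruleD hd _ ih => exact .empty_of_unboxing_add hd (.unbox _) (.unbox _) ih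
  | ruleT hT _ ih => exact .box_left hT ih
  | rule4 h4 _ ih => exact .box_of_unboxing (.keep _ h4) ih
  | ruleD4 _ h4 hd _ ih =>
    exact .empty_of_unboxing_add (by simpa [h5] using hd) (.unbox _) (.keep _ h4) ih
  | @ruleCD Γ hc hpd _ ih =>
    rcases eq_or_ne Γ 0 with rfl | h0
    · exact ih
    · exact .empty_of_unboxing hpd (.map_box_self hc h0) ih
  | ruleC4 hc h4 h0 _ ih => exact .box_of_unboxing (.map_box_add hc h4 h0) ih
  | @ruleCD4 Γ Sg hc h4 hpd _ ih =>
    by_cases h0 : Γ + Sg = 0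
    · obtain ⟨rfl, rfl⟩ := add_eq_zero.1 h0
      exact ih
    · exact .empty_of_unboxing hpd (.map_box_add hc h4 h0) ih
  | @ruleK4 Γ Sg _ hc hn h4 _ ih =>
    by_cases h0 : Γ + Sg = 0
    · obtain ⟨rfl, rfl⟩ := add_eq_zero.1 h0
      exact .box_of_unboxing (.nil hn) ih
    · exact .box_of_unboxing (.map_box_add hc h4 h0) ih
  | rule5 h | ruleD5 _ h | ruleK45 _ _ _ h | ruleKD45 _ _ _ h => simp [h5] at h
  | mcut _ _ _ _ _ ih ih' => exact .multicut ih ih'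

theorem of_valid (h5 : Ax.five = false) (h : Valid Ax Γ Δ) : GM Ax cut Γ Δ := by
  by_contra hd
  obtain ⟨w, hΓ, hΔ⟩ := World.exists_of_not_derivable hd
  obtain ⟨B, hB, hwB⟩ := w.of_eventually h5 h fun A hA ↦
    (w.evalP_sat A).2 ((w.truth_lemma A).1 (hΓ A hA))
  exact (w.truth_lemma B).2 (hΔ B hB) ((w.evalP_sat B).1 hwB)

end GM

theorem GM_sound_complete_general (Ax : MAx) (cut : Bool) (h5 : Ax.five = false) (A : Fm) :
    MThm Ax A ↔ GM Ax cut 0 {A} :=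
  calc
    MThm Ax A ↔ Valid Ax 0 {A} := by simp [mThm_iff_eventually, Valid]
    _ ↔ GM Ax cut 0 {A} := ⟨GM.of_valid h5, GM.valid h5⟩

/-- Soundness and completeness of the sequent calculus `G_M𝒜ConW` for the
monotone modal logic `M𝒜`, for every `𝒜 ⊆ {N, C, P, D, 4}`: `A ∈ M𝒜` iff
`⇒ A` is derivable in `G_M𝒜ConW`. -/
theorem GM_sound_complete (Ax : MAx) (hT : Ax.t = false) (h5 : Ax.five = false)
    (A : Fm) : MThm Ax A ↔ GM Ax false 0 {A} :=
  GM_sound_complete_general Ax false h5 A
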